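/- (Christ–Kiselev Lemma, Lemma 3.1.) Let X and Y be Banach spaces, let −∞ ≤ a < b ≤ ∞, and let K(t,s) be a continuous function on [a,b]×[a,b] taking values in B(X,Y), the space of bounded linear maps from X to Y. For Bochner-integrable f : [a,b] → X define Tf(t) = ∫_a^b K(t,s) f(s) ds and Wf(t) = ∫_t^b K(t,s) f(s) ds. Suppose there is a constant C such that ‖Tf‖_{L^q([a,b];Y)} ≤ C ‖f‖_{L^p([a,b];X)} for every such f. Then, provided 1 ≤ p < q ≤ ∞, one has ‖Wf‖_{L^q([a,b];Y)} ≤ (2^{−2(1/p−1/q)} · 2C)/(1 − 2^{−(1/p−1/q)}) · ‖f‖_{L^p([a,b];X)} for every such f. -/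

import Mathlib

open MeasureTheory
open scoped ENNReal

/-!
Let `G s` be the fraction of the mass of `‖f‖ ^ p` lying in `(-∞, s]`, and cut the line into the
`2 ^ j` cells on which `G` stays in a dyadic interval of length `2⁻ʲ`. For `t < s` there is, apart
from a set of `s` on which `f` vanishes, exactly one generation `j ≥ 1` at which `t` and `s` lie
in the left and right halves of one cell of generation `j - 1` (Whitney decomposition of the
triangle `t < s`). Hence `W f = ∑ j ≥ 1, W_j f`, where on each left half `W_j f` equals `T`
applied to `f` cut off to the sibling right half. Each cut-off has `L^p` norm at most
`2^(-j/p) ‖f‖_p`, and at most `2 ^ j` disjoint left halves contribute to the `L^q` norm of `W_j f`,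
so `‖W_j f‖_q ≤ 2^(j/q) 2^(-j/p) C ‖f‖_p`; since `p < q` this is a convergent geometric series.
-/

open Set Filter Topology
open Finset (range)
open scoped Finset

namespace ChristKiselev

section LpEstimates

variable {α ε : Type*} [MeasurableSpace α] {μ : Measure α} [TopologicalSpace ε]
  [ContinuousENorm ε] {q B : ℝ≥0∞}

lemma eLpNorm_le_iff_lintegral_rpow_enorm_le {f : α → ε}
    (hq : q ≠ 0) (hq_top : q ≠ ∞) :
    eLpNorm f q μ ≤ B ↔ ∫⁻ x, ‖f x‖ₑ ^ q.toReal ∂μ ≤ B ^ q.toReal := by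
  rw [eLpNorm_eq_lintegral_rpow_enorm_toReal hq hq_top, one_div,
    ENNReal.rpow_inv_le_iff (ENNReal.toReal_pos hq hq_top)]

lemma eLpNorm_le_tsum_of_enorm_le_tsum {F : ℕ → α → ε} {g : α → ε} (hq : 1 ≤ q)
    (hF : ∀ n, AEStronglyMeasurable (F n) μ) (hg : ∀ᵐ x ∂μ, ‖g x‖ₑ ≤ ∑' n, ‖F n x‖ₑ) :
    eLpNorm g q μ ≤ ∑' n, eLpNorm (F n) q μ := by
  by_cases hq_top : q = ∞
  · subst hq_top
    refine eLpNormEssSup_le_of_ae_enorm_bound ?_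
    filter_upwards [hg, ae_all_iff.2 fun n ↦ ae_le_eLpNormEssSup (f := F n) (μ := μ)] with x hx hFx
    exact hx.trans (ENNReal.tsum_le_tsum hFx)
  have hq0 : q ≠ 0 := (zero_lt_one.trans_le hq).ne'
  have partial_le (N : ℕ) :
      ∫⁻ x, (∑ n ∈ range N, ‖F n x‖ₑ) ^ q.toReal ∂μ
        ≤ (∑' n, eLpNorm (F n) q μ) ^ q.toReal := by
    have minkowski : eLpNorm (∑ n ∈ range N, fun x ↦ ‖F n x‖ₑ) q μ ≤ ∑' n, eLpNorm (F n) q μ :=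
      calc
        _ ≤ ∑ n ∈ range N, eLpNorm (fun x ↦ ‖F n x‖ₑ) q μ :=
          eLpNorm_sum_le (fun n _ ↦ (hF n).enorm.aestronglyMeasurable) hq
        _ ≤ ∑' n, eLpNorm (F n) q μ := by
          simpa only [eLpNorm_enorm] using ENNReal.sum_le_tsum _
    simpa using (eLpNorm_le_iff_lintegral_rpow_enorm_le hq0 hq_top).1 minkowski
  rw [eLpNorm_le_iff_lintegral_rpow_enorm_le hq0 hq_top]
  calc
    ∫⁻ x, ‖g x‖ₑ ^ q.toReal ∂μ
      ≤ ∫⁻ x, liminf (fun N ↦ (∑ n ∈ range N, ‖F n x‖ₑ) ^ q.toReal) atTop ∂μ := by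
        refine lintegral_mono_ae ?_
        filter_upwards [hg] with x hx
        have h_lim : Tendsto (fun N ↦ (∑ n ∈ range N, ‖F n x‖ₑ) ^ q.toReal) atTop
            (𝓝 ((∑' n, ‖F n x‖ₑ) ^ q.toReal)) :=
          (ENNReal.tendsto_nat_tsum _).ennrpow_const _
        rw [h_lim.liminf_eq]
        gcongr
    _ ≤ liminf (fun N ↦ ∫⁻ x, (∑ n ∈ range N, ‖F n x‖ₑ) ^ q.toReal ∂μ) atTop :=
        lintegral_liminf_le' fun N ↦
          (Finset.aemeasurable_fun_sum _ fun n _ ↦ (hF n).enorm).pow_const _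
    _ ≤ (∑' n, eLpNorm (F n) q μ) ^ q.toReal :=
        liminf_le_of_frequently_le' (Frequently.of_forall partial_le)

lemma eLpNorm_le_card_rpow_mul {ι : Type*} {I : Finset ι} {F : ι → α → ε} {g : α → ε}
    (hF : ∀ i, AEStronglyMeasurable (F i) μ) (hFB : ∀ i, eLpNorm (F i) q μ ≤ B)
    (hg : ∀ x, ∃ i ∈ I, ‖g x‖ₑ ≤ ‖F i x‖ₑ) :
    eLpNorm g q μ ≤ (#I : ℝ≥0∞) ^ (1 / q).toReal * B := by
  rcases eq_or_ne q 0 with rfl | hq0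
  · simp
  rcases eq_or_ne q ∞ with rfl | hq_top
  · have h_ae : ∀ᵐ x ∂μ, ∀ i ∈ I, ‖F i x‖ₑ ≤ B :=
      (ae_ball_iff I.countable_toSet).2 fun i _ ↦
        (ae_le_eLpNormEssSup (f := F i) (μ := μ)).mono fun x hx ↦ hx.trans (hFB i)
    simp only [one_div, ENNReal.inv_top, ENNReal.toReal_zero, ENNReal.rpow_zero, one_mul]
    refine eLpNormEssSup_le_of_ae_enorm_bound (h_ae.mono fun x hx ↦ ?_)
    obtain ⟨i, hi, hgi⟩ := hg x
    exact hgi.trans (hx i hi)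
  have hq_pos := ENNReal.toReal_pos hq0 hq_top
  rw [eLpNorm_le_iff_lintegral_rpow_enorm_le hq0 hq_top]
  calc
    ∫⁻ x, ‖g x‖ₑ ^ q.toReal ∂μ ≤ ∫⁻ x, ∑ i ∈ I, ‖F i x‖ₑ ^ q.toReal ∂μ := by
      refine lintegral_mono fun x ↦ ?_
      obtain ⟨i, hi, hgi⟩ := hg x
      calc
        ‖g x‖ₑ ^ q.toReal ≤ ‖F i x‖ₑ ^ q.toReal := by gcongr
        _ ≤ ∑ i ∈ I, ‖F i x‖ₑ ^ q.toReal :=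
          Finset.single_le_sum (f := fun i ↦ ‖F i x‖ₑ ^ q.toReal) (fun _ _ ↦ zero_le) hi
    _ = ∑ i ∈ I, ∫⁻ x, ‖F i x‖ₑ ^ q.toReal ∂μ :=
      lintegral_finsetSum' _ fun i _ ↦ (hF i).enorm.pow_const _
    _ ≤ ∑ _i ∈ I, B ^ q.toReal := Finset.sum_le_sum fun i _ ↦
      (eLpNorm_le_iff_lintegral_rpow_enorm_le hq0 hq_top).1 (hFB i)
    _ = ((#I : ℝ≥0∞) ^ (1 / q).toReal * B) ^ q.toReal := by
      rw [ENNReal.mul_rpow_of_nonneg _ _ hq_pos.le, ← ENNReal.rpow_mul, one_div,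
        ENNReal.toReal_inv, inv_mul_cancel₀ hq_pos.ne', ENNReal.rpow_one, Finset.sum_const,
        nsmul_eq_mul]

end LpEstimates

section DyadicCells

variable {α : Type*} {G : α → ℝ}

/-- The index `n` of the generation-`j` dyadic interval `[n / 2 ^ j, (n + 1) / 2 ^ j)` containing
`G s`; its fibres are the cells into which a `[0, 1]`-valued `G` cuts `α`. -/
noncomputable def dyadicIndex (G : α → ℝ) (j : ℕ) (s : α) : ℕ := ⌊2 ^ j * G s⌋₊

lemma dyadicIndex_succ_div_two (G : α → ℝ) (j : ℕ) (s : α) :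
    dyadicIndex G (j + 1) s / 2 = dyadicIndex G j s := by
  rw [dyadicIndex, dyadicIndex, ← Nat.floor_div_natCast]
  congr 1
  push_cast
  ring

lemma dyadicIndex_le_two_pow {s : α} (h1 : G s ≤ 1) (j : ℕ) : dyadicIndex G j s ≤ 2 ^ j := by
  refine Nat.floor_le_of_le ?_
  push_cast
  exact mul_le_of_le_one_right (by positivity) h1

lemma eq_one_of_dyadicIndex_zero_ne_zero {s : α} (h1 : G s ≤ 1) (h : dyadicIndex G 0 s ≠ 0) :
    G s = 1 := by
  refine h1.antisymm ?_
  simpa [dyadicIndex] using h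

lemma le_add_of_dyadicIndex_eq {s t : α} {j : ℕ} (h0 : 0 ≤ G t)
    (h : dyadicIndex G j s = dyadicIndex G j t) : G s ≤ G t + (1 / 2) ^ j := by
  have h_two : (0 : ℝ) < 2 ^ j := by positivity
  refine le_of_mul_le_mul_left ?_ h_two
  calc
    2 ^ j * G s ≤ dyadicIndex G j s + 1 := (Nat.lt_floor_add_one _).le
    _ = dyadicIndex G j t + 1 := by rw [h]
    _ ≤ 2 ^ j * G t + 1 := by gcongr; exact Nat.floor_le (mul_nonneg h_two.le h0)
    _ = 2 ^ j * (G t + (1 / 2) ^ j) := by rw [mul_add, ← mul_pow]; norm_num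

lemma monotone_dyadicIndex [Preorder α] (hG : Monotone G) (j : ℕ) : Monotone (dyadicIndex G j) :=
  fun _ _ hst ↦ Nat.floor_mono (mul_le_mul_of_nonneg_left (hG hst) (by positivity))

variable [LinearOrder α]

/-- The part to the right of `t` of the generation-`j` cell containing `t`. -/
def rightCell (G : α → ℝ) (j : ℕ) (t : α) : Set α :=
  {s | t < s ∧ dyadicIndex G j s = dyadicIndex G j t}

/-- The generation-`j` cell adjacent on the right to the one containing `t`, provided that both
are halves of the same cell of the previous generation; otherwise the empty set. -/
def rightSibling (G : α → ℝ) (j : ℕ) (t : α) : Set α :=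
  {s | Even (dyadicIndex G j t) ∧ dyadicIndex G j s = dyadicIndex G j t + 1}

lemma rightCell_eq_union_rightSibling (hG : Monotone G) (j : ℕ) (t : α) :
    rightCell G j t = rightCell G (j + 1) t ∪ rightSibling G (j + 1) t := by
  ext s
  have ht := dyadicIndex_succ_div_two G j t
  have hs := dyadicIndex_succ_div_two G j s
  simp only [rightCell, rightSibling, mem_union, mem_ofPred_eq, Nat.even_iff]
  rcases le_or_gt s t with hst | hst
  · have := monotone_dyadicIndex hG (j + 1) hst
    simp only [hst.not_gt, false_and, false_or, false_iff]
    omega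
  · have := monotone_dyadicIndex hG (j + 1) hst.le
    simp only [hst, true_and]
    omega

lemma disjoint_rightCell_rightSibling (G : α → ℝ) (j : ℕ) (t : α) :
    Disjoint (rightCell G j t) (rightSibling G j t) :=
  Set.disjoint_left.2 fun _ hs hs' ↦ absurd (hs.2.symm.trans hs'.2) (Nat.succ_ne_self _).symm

lemma antitone_rightCell (hG : Monotone G) (t : α) : Antitone fun j ↦ rightCell G j t :=
  antitone_nat_of_succ_le fun j ↦ by
    rw [rightCell_eq_union_rightSibling hG j t]
    exact subset_union_left

lemma eq_of_mem_iInter_rightCell (hG : Monotone G) (h0 : ∀ s, 0 ≤ G s) {s t : α}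
    (hs : s ∈ ⋂ j, rightCell G j t) : G s = G t := by
  rw [mem_iInter] at hs
  refine le_antisymm ?_ (hG (hs 0).1.le)
  have h_lim : Tendsto (fun j : ℕ ↦ G t + (1 / 2 : ℝ) ^ j) atTop (𝓝 (G t + 0)) :=
    (tendsto_pow_atTop_nhds_zero_of_lt_one (by norm_num) (by norm_num)).const_add _
  simpa using ge_of_tendsto' h_lim fun j ↦ le_add_of_dyadicIndex_eq (h0 t) (hs j).2

variable [TopologicalSpace α] [OrderTopology α] [MeasurableSpace α] [BorelSpace α]
  {Y : Type*} [NormedAddCommGroup Y] [NormedSpace ℝ Y] {μ : Measure α} {h : α → Y}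

lemma measurable_dyadicIndex (hG : Monotone G) (j : ℕ) : Measurable (dyadicIndex G j) :=
  (monotone_dyadicIndex hG j).measurable

lemma measurableSet_dyadicIndex_eq (hG : Monotone G) (j n : ℕ) :
    MeasurableSet {s | dyadicIndex G j s = n} :=
  measurable_dyadicIndex hG j (measurableSet_singleton n)

lemma measurableSet_rightCell (hG : Monotone G) (j : ℕ) (t : α) :
    MeasurableSet (rightCell G j t) :=
  measurableSet_Ioi.inter (measurableSet_dyadicIndex_eq hG j _)

lemma measurableSet_rightSibling (hG : Monotone G) (j : ℕ) (t : α) :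
    MeasurableSet (rightSibling G j t) :=
  (MeasurableSet.const _).inter (measurableSet_dyadicIndex_eq hG j _)

lemma sum_setIntegral_rightSibling (hG : Monotone G) {t : α} (hh : IntegrableOn h (Ioi t) μ)
    (N : ℕ) :
    ∑ j ∈ range N, ∫ s in rightSibling G (j + 1) t, h s ∂μ
      = ∫ s in rightCell G 0 t, h s ∂μ - ∫ s in rightCell G N t, h s ∂μ := by
  induction N with
  | zero => simp
  | succ N ih =>
    have h_cell : IntegrableOn h (rightCell G N t) μ := hh.mono_set fun _ hs ↦ hs.1
    rw [rightCell_eq_union_rightSibling hG N t, integrableOn_union] at h_cell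
    rw [Finset.sum_range_succ, ih, rightCell_eq_union_rightSibling hG N t,
      setIntegral_union (disjoint_rightCell_rightSibling G (N + 1) t)
        (measurableSet_rightSibling hG _ _) h_cell.1 h_cell.2]
    abel

lemma setIntegral_Ioi_eq_setIntegral_rightCell_zero (hG : Monotone G) (h1 : ∀ s, G s ≤ 1)
    (h_null : ∀ᵐ s ∂μ, G s = 1 → h s = 0) (t : α) :
    ∫ s in Ioi t, h s ∂μ = ∫ s in rightCell G 0 t, h s ∂μ := by
  refine setIntegral_eq_of_subset_of_ae_sdiff_eq_zero measurableSet_Ioi.nullMeasurableSet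
    (fun _ hs ↦ hs.1) ?_
  filter_upwards [h_null] with s hs hst
  refine hs (eq_one_of_dyadicIndex_zero_ne_zero (h1 s) fun h_idx ↦ hst.2 ⟨hst.1, ?_⟩)
  have := monotone_dyadicIndex hG 0 (le_of_lt hst.1)
  omega

lemma tendsto_setIntegral_rightCell (hG : Monotone G) (h0 : ∀ s, 0 ≤ G s) {t : α}
    (h_null : ∀ᵐ s ∂μ, G s = G t → h s = 0) (hh : IntegrableOn h (Ioi t) μ) :
    Tendsto (fun N ↦ ∫ s in rightCell G N t, h s ∂μ) atTop (𝓝 0) := by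
  have h_inter : ∫ s in ⋂ N, rightCell G N t, h s ∂μ = 0 := by
    refine setIntegral_eq_zero_of_ae_eq_zero ?_
    filter_upwards [h_null] with s hs h_mem using hs (eq_of_mem_iInter_rightCell hG h0 h_mem)
  rw [← h_inter]
  exact tendsto_setIntegral_of_antitone (measurableSet_rightCell hG · t) (antitone_rightCell hG t)
    ⟨0, hh.mono_set fun _ hs ↦ hs.1⟩

lemma enorm_setIntegral_Ioi_le_tsum (hG : Monotone G) (h0 : ∀ s, 0 ≤ G s) (h1 : ∀ s, G s ≤ 1)
    (h_null : ∀ c, ∀ᵐ s ∂μ, G s = c → h s = 0) (t : α) :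
    ‖∫ s in Ioi t, h s ∂μ‖ₑ ≤ ∑' j, ‖∫ s in rightSibling G (j + 1) t, h s ∂μ‖ₑ := by
  by_cases hh : IntegrableOn h (Ioi t) μ
  · have h_lim : Tendsto (fun N ↦ ∑ j ∈ range N, ∫ s in rightSibling G (j + 1) t, h s ∂μ) atTop
        (𝓝 (∫ s in Ioi t, h s ∂μ)) := by
      simp_rw [sum_setIntegral_rightSibling hG hh,
        setIntegral_Ioi_eq_setIntegral_rightCell_zero hG h1 (h_null 1)]
      simpa using (tendsto_setIntegral_rightCell hG h0 (h_null (G t)) hh).const_sub _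
    exact le_of_tendsto' h_lim.enorm fun N ↦ (enorm_sum_le _ _).trans (ENNReal.sum_le_tsum _)
  · simp [integral_undef hh]

end DyadicCells

section CumulativeFraction

variable {α : Type*} [LinearOrder α] [MeasurableSpace α] {ν : Measure α}

lemma measure_le_of_ordConnected [TopologicalSpace α] [OrderTopology α]
    [SecondCountableTopology α] [NullSingletonClass ν] {s : Set α} {η : ℝ≥0∞} (hs : s.OrdConnected)
    (h_Ioc : ∀ u ∈ s, ∀ v ∈ s, u ≤ v → ν (Ioc u v) ≤ η) : ν s ≤ η := by
  rcases s.eq_empty_or_nonempty with rfl | hs_ne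
  · simp
  have : Nonempty s := hs_ne.to_subtype
  obtain ⟨u, hu_anti, hu⟩ := exists_seq_antitone_tendsto_atTop_atBot s
  obtain ⟨v, hv_mono, hv⟩ := exists_seq_monotone_tendsto_atTop_atTop s
  have h_exhaust : s ⊆ ⋃ n, Icc (u n : α) (v n) := fun x hx ↦ by
    obtain ⟨n, hun, hvn⟩ :=
      ((hu.eventually_le_atBot ⟨x, hx⟩).and (hv.eventually_ge_atTop ⟨x, hx⟩)).exists
    exact mem_iUnion.2 ⟨n, hun, hvn⟩
  have h_mono : Monotone fun n ↦ Icc (u n : α) (v n) := fun m n hmn ↦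
    Icc_subset_Icc (hu_anti hmn) (hv_mono hmn)
  calc
    ν s ≤ ν (⋃ n, Icc (u n : α) (v n)) := measure_mono h_exhaust
    _ = ⨆ n, ν (Icc (u n : α) (v n)) := h_mono.measure_iUnion
    _ ≤ η := iSup_le fun n ↦ by
      rw [← measure_congr Ioc_ae_eq_Icc]
      rcases le_or_gt (u n) (v n) with huv | hvu
      · exact h_Ioc _ (u n).2 _ (v n).2 huv
      · simp [Ioc_eq_empty_of_le (Subtype.coe_le_coe.2 hvu.le)]

/-- The normalised distribution function `s ↦ ν (-∞, s] / ν (α)`; it is identically `0` when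
`ν = 0`. -/
noncomputable def cumulativeFraction (ν : Measure α) (s : α) : ℝ := ν.real (Iic s) / ν.real univ

lemma cumulativeFraction_nonneg (ν : Measure α) (s : α) : 0 ≤ cumulativeFraction ν s :=
  div_nonneg measureReal_nonneg measureReal_nonneg

variable [IsFiniteMeasure ν]

lemma cumulativeFraction_le_one (s : α) : cumulativeFraction ν s ≤ 1 :=
  div_le_one_of_le₀ (measureReal_mono (subset_univ _)) measureReal_nonneg

lemma monotone_cumulativeFraction : Monotone (cumulativeFraction ν) := fun _ _ hst ↦
  div_le_div_of_nonneg_right (measureReal_mono (Iic_subset_Iic.2 hst)) measureReal_nonneg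

lemma measureReal_univ_mul_cumulativeFraction (s : α) :
    ν.real univ * cumulativeFraction ν s = ν.real (Iic s) := by
  refine mul_div_cancel_of_imp' fun h_univ ↦ le_antisymm ?_ measureReal_nonneg
  exact h_univ ▸ measureReal_mono (subset_univ _)

variable [TopologicalSpace α] [OrderTopology α] [BorelSpace α]

lemma measureReal_Ioc_eq {u v : α} (huv : u ≤ v) :
    ν.real (Ioc u v) = ν.real univ * (cumulativeFraction ν v - cumulativeFraction ν u) := by
  rw [mul_sub, measureReal_univ_mul_cumulativeFraction, measureReal_univ_mul_cumulativeFraction,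
    ← Iic_sdiff_Iic, measureReal_sdiff (Iic_subset_Iic.2 huv) measurableSet_Iic]

variable [SecondCountableTopology α] [NullSingletonClass ν]

lemma measure_le_of_cumulativeFraction_le_add {s : Set α} {c : ℝ} (hs : s.OrdConnected)
    (hc : ∀ u ∈ s, ∀ v ∈ s, cumulativeFraction ν v ≤ cumulativeFraction ν u + c) :
    ν s ≤ ENNReal.ofReal c * ν univ := by
  refine measure_le_of_ordConnected hs fun u hu v hv huv ↦ ?_
  rw [← ofReal_measureReal (measure_ne_top ν (Ioc u v)), measureReal_Ioc_eq huv, mul_comm,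
    ENNReal.ofReal_mul' measureReal_nonneg, ofReal_measureReal]
  gcongr
  linarith [hc u hu v hv]

lemma measure_cumulativeFraction_eq_zero (c : ℝ) : ν {s | cumulativeFraction ν s = c} = 0 := by
  have h_conn : OrdConnected {s | cumulativeFraction ν s = c} :=
    ordConnected_singleton.preimage_mono monotone_cumulativeFraction
  simpa using measure_le_of_cumulativeFraction_le_add h_conn (c := 0)
    fun u hu v hv ↦ (hv.trans (hu.symm.trans (add_zero _).symm)).le

lemma measure_dyadicIndex_cumulativeFraction_le (j n : ℕ) :
    ν {s | dyadicIndex (cumulativeFraction ν) j s = n} ≤ (2 ^ j)⁻¹ * ν univ := by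
  have h_conn : OrdConnected {s | dyadicIndex (cumulativeFraction ν) j s = n} :=
    ordConnected_singleton.preimage_mono (monotone_dyadicIndex monotone_cumulativeFraction j)
  have h_half : ENNReal.ofReal ((1 / 2) ^ j) = (2 ^ j)⁻¹ := by
    rw [ENNReal.ofReal_pow (by norm_num), one_div, ENNReal.ofReal_inv_of_pos (by norm_num),
      ENNReal.ofReal_ofNat, ENNReal.inv_pow]
  rw [← h_half]
  exact measure_le_of_cumulativeFraction_le_add h_conn fun u hu v hv ↦
    le_add_of_dyadicIndex_eq (cumulativeFraction_nonneg ν u) (hv.trans hu.symm)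

end CumulativeFraction

section PowerMeasure

variable {α X : Type*} [MeasurableSpace α] {μ : Measure α} [NormedAddCommGroup X] {f : α → X}
  {p : ℝ≥0∞}

/-- The measure `‖f‖ ^ p dμ`, whose dyadic subdivision is the one adapted to `f`. -/
noncomputable def powerMeasure (f : α → X) (p : ℝ≥0∞) (μ : Measure α) : Measure α :=
  μ.withDensity fun s ↦ ‖f s‖ₑ ^ p.toReal

instance [NullSingletonClass μ] : NullSingletonClass (powerMeasure f p μ) :=
  nullSingletonClass_withDensity _

lemma eLpNorm_indicator_eq_powerMeasure_rpow {s : Set α} (hs : MeasurableSet s) (hp : p ≠ 0)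
    (hp_top : p ≠ ∞) :
    eLpNorm (s.indicator f) p μ = powerMeasure f p μ s ^ (1 / p).toReal := by
  rw [eLpNorm_indicator_eq_eLpNorm_restrict hs, eLpNorm_eq_lintegral_rpow_enorm_toReal hp hp_top,
    powerMeasure, withDensity_apply _ hs, one_div, one_div, ENNReal.toReal_inv]

lemma eLpNorm_eq_powerMeasure_univ_rpow (hp : p ≠ 0) (hp_top : p ≠ ∞) :
    eLpNorm f p μ = powerMeasure f p μ univ ^ (1 / p).toReal := by
  simpa using eLpNorm_indicator_eq_powerMeasure_rpow (f := f) (μ := μ) MeasurableSet.univ hp hp_top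

lemma isFiniteMeasure_powerMeasure (hp : p ≠ 0) (hp_top : p ≠ ∞) (hf : eLpNorm f p μ ≠ ∞) :
    IsFiniteMeasure (powerMeasure f p μ) :=
  isFiniteMeasure_withDensity (lintegral_rpow_enorm_lt_top_of_eLpNorm_lt_top hp hp_top hf.lt_top).ne

lemma ae_eq_zero_of_powerMeasure_eq_zero (hf : AEStronglyMeasurable f μ) (hp : p ≠ 0)
    (hp_top : p ≠ ∞) {s : Set α} (hs : powerMeasure f p μ s = 0) : ∀ᵐ x ∂μ, x ∈ s → f x = 0 := by
  rw [powerMeasure, withDensity_apply_eq_zero' (hf.enorm.pow_const _)] at hs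
  filter_upwards [measure_eq_zero_iff_ae_notMem.1 hs] with x hx hxs
  by_contra hfx
  exact hx ⟨by simp [hfx, (ENNReal.toReal_pos hp hp_top).le.not_gt], hxs⟩

variable [LinearOrder α] [TopologicalSpace α] [OrderTopology α] [SecondCountableTopology α]
  [BorelSpace α] [NullSingletonClass μ] [IsFiniteMeasure (powerMeasure f p μ)]

lemma eLpNorm_indicator_dyadicIndex_le (hp : p ≠ 0) (hp_top : p ≠ ∞) (j n : ℕ) :
    eLpNorm ({s | dyadicIndex (cumulativeFraction (powerMeasure f p μ)) j s = n}.indicator f) p μ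
      ≤ ((2 ^ j)⁻¹ : ℝ≥0∞) ^ (1 / p).toReal * eLpNorm f p μ := by
  rw [eLpNorm_indicator_eq_powerMeasure_rpow
      (measurableSet_dyadicIndex_eq monotone_cumulativeFraction j n) hp hp_top,
    eLpNorm_eq_powerMeasure_univ_rpow hp hp_top,
    ← ENNReal.mul_rpow_of_nonneg _ _ ENNReal.toReal_nonneg]
  gcongr
  exact measure_dyadicIndex_cumulativeFraction_le j n

lemma ae_eq_zero_of_cumulativeFraction_powerMeasure_eq (hf : AEStronglyMeasurable f μ)
    (hp : p ≠ 0) (hp_top : p ≠ ∞) (c : ℝ) :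
    ∀ᵐ s ∂μ, cumulativeFraction (powerMeasure f p μ) s = c → f s = 0 :=
  ae_eq_zero_of_powerMeasure_eq_zero hf hp hp_top (measure_cumulativeFraction_eq_zero c)

end PowerMeasure

section TruncatedIntegral

variable {α X Y : Type*} [MeasurableSpace α] {μ : Measure α} [NormedAddCommGroup X]
  [NormedSpace ℝ X] [NormedAddCommGroup Y] [NormedSpace ℝ Y] {p q C D : ℝ≥0∞}
  {h : α → α → Y} {K : α → α → X →L[ℝ] Y} {f : α → X}

lemma eLpNorm_setIntegral_le_of_eLpNorm_integral_le
    (hT : ∀ g : α → X, Integrable g μ →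
      eLpNorm (fun t ↦ ∫ s, K t s (g s) ∂μ) q μ ≤ C * eLpNorm g p μ)
    (hf : Integrable f μ) {A : Set α} (hA : MeasurableSet A) :
    eLpNorm (fun t ↦ ∫ s in A, K t s (f s) ∂μ) q μ ≤ C * eLpNorm (A.indicator f) p μ := by
  have h_ind (t : α) : ∫ s in A, K t s (f s) ∂μ = ∫ s, K t s (A.indicator f s) ∂μ := by
    rw [← integral_indicator hA]
    congr 1 with s
    by_cases hs : s ∈ A <;> simp [hs]
  simpa only [h_ind] using hT _ (hf.indicator hA)

lemma aestronglyMeasurable_kernel_apply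
    (hK : AEStronglyMeasurable (Function.uncurry K) (μ.prod μ)) (hf : AEStronglyMeasurable f μ) :
    AEStronglyMeasurable (Function.uncurry fun t s ↦ K t s (f s)) (μ.prod μ) :=
  (ContinuousLinearMap.id ℝ (X →L[ℝ] Y)).aestronglyMeasurable_comp₂ hK hf.comp_snd

variable [SFinite μ]

lemma aestronglyMeasurable_setIntegral_section
    (hh : AEStronglyMeasurable (Function.uncurry h) (μ.prod μ)) {R : Set (α × α)}
    (hR : MeasurableSet R) :
    AEStronglyMeasurable (fun t ↦ ∫ s in {s | (t, s) ∈ R}, h t s ∂μ) μ := by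
  have h_ind (t : α) : ∫ s in {s | (t, s) ∈ R}, h t s ∂μ
      = ∫ s, R.indicator (Function.uncurry h) (t, s) ∂μ :=
    (integral_indicator (measurable_prodMk_left hR)).symm
  simpa only [h_ind] using (hh.indicator hR).integral_prod_right'

variable [LinearOrder α] [TopologicalSpace α] [OrderTopology α] [BorelSpace α] {G : α → ℝ}

lemma aestronglyMeasurable_setIntegral_rightSibling
    (hh : AEStronglyMeasurable (Function.uncurry h) (μ.prod μ)) (hG : Monotone G) (j : ℕ) :
    AEStronglyMeasurable (fun t ↦ ∫ s in rightSibling G j t, h t s ∂μ) μ := by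
  have h_idx := measurable_dyadicIndex hG j
  have h_even : MeasurableSet {z : α × α | Even (dyadicIndex G j z.1)} :=
    h_idx.comp measurable_fst (MeasurableSet.of_discrete (s := {n | Even n}))
  exact aestronglyMeasurable_setIntegral_section hh (h_even.inter
    (measurableSet_eq_fun (h_idx.comp measurable_snd) ((h_idx.comp measurable_fst).add_const 1)))

lemma eLpNorm_setIntegral_rightSibling_le
    (hh : AEStronglyMeasurable (Function.uncurry h) (μ.prod μ)) (hG : Monotone G)
    (h1 : ∀ s, G s ≤ 1) (j : ℕ)
    (hD : ∀ n, eLpNorm (fun t ↦ ∫ s in {s | dyadicIndex G j s = n}, h t s ∂μ) q μ ≤ D) :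
    eLpNorm (fun t ↦ ∫ s in rightSibling G j t, h t s ∂μ) q μ
      ≤ (2 ^ j : ℝ≥0∞) ^ (1 / q).toReal * D := by
  have h_meas (n : ℕ) :
      AEStronglyMeasurable (fun t ↦ ∫ s in {s | dyadicIndex G j s = n}, h t s ∂μ) μ :=
    aestronglyMeasurable_setIntegral_section hh
      (measurable_snd (measurableSet_dyadicIndex_eq hG j n))
  have h_le : eLpNorm (fun t ↦ ∫ s in rightSibling G j t, h t s ∂μ) q μ
      ≤ (#(range (2 ^ j)) : ℝ≥0∞) ^ (1 / q).toReal * D := by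
    refine eLpNorm_le_card_rpow_mul (fun n ↦ h_meas (n + 1)) (fun n ↦ hD (n + 1)) fun t ↦ ?_
    rcases (rightSibling G j t).eq_empty_or_nonempty with h_empty | ⟨s, h_even, hs⟩
    · exact ⟨0, by simp, by simp [h_empty]⟩
    · refine ⟨dyadicIndex G j t, ?_, ?_⟩
      · have := dyadicIndex_le_two_pow (h1 s) j
        exact Finset.mem_range.2 (by omega)
      · simp [rightSibling, h_even]
  simpa using h_le

variable [SecondCountableTopology α] [NullSingletonClass μ]

lemma eLpNorm_setIntegral_rightSibling_powerMeasure_le [IsFiniteMeasure (powerMeasure f p μ)]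
    (hK : AEStronglyMeasurable (Function.uncurry K) (μ.prod μ)) (hp : p ≠ 0) (hpq : p < q)
    (hT : ∀ g : α → X, Integrable g μ →
      eLpNorm (fun t ↦ ∫ s, K t s (g s) ∂μ) q μ ≤ C * eLpNorm g p μ)
    (hf : Integrable f μ) (j : ℕ) :
    eLpNorm (fun t ↦ ∫ s in rightSibling (cumulativeFraction (powerMeasure f p μ)) j t,
        K t s (f s) ∂μ) q μ
      ≤ ((2 : ℝ≥0∞) ^ (-(1 / p - 1 / q).toReal)) ^ j * (C * eLpNorm f p μ) := by
  have h_exp : (1 / p - 1 / q).toReal = (1 / p).toReal - (1 / q).toReal :=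
    ENNReal.toReal_sub_of_le (by simpa using hpq.le) (by simpa using hp)
  have h_rate : (2 ^ j : ℝ≥0∞) ^ (1 / q).toReal * ((2 ^ j)⁻¹ : ℝ≥0∞) ^ (1 / p).toReal
      = ((2 : ℝ≥0∞) ^ (-(1 / p - 1 / q).toReal)) ^ j := by
    rw [ENNReal.inv_rpow, ← ENNReal.rpow_neg,
      ← ENNReal.rpow_add _ _ (by simp) (ENNReal.pow_ne_top (by simp)), ← ENNReal.rpow_natCast,
      ← ENNReal.rpow_natCast, ← ENNReal.rpow_mul, ← ENNReal.rpow_mul, h_exp]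
    ring_nf
  refine (eLpNorm_setIntegral_rightSibling_le (aestronglyMeasurable_kernel_apply hK hf.1)
    monotone_cumulativeFraction cumulativeFraction_le_one j fun n ↦
      (eLpNorm_setIntegral_le_of_eLpNorm_integral_le hT hf
        (measurableSet_dyadicIndex_eq monotone_cumulativeFraction j n)).trans
      (mul_le_mul_right (eLpNorm_indicator_dyadicIndex_le hp hpq.ne_top j n) C)).trans_eq ?_
  rw [← h_rate]
  ring

lemma eLpNorm_setIntegral_Ioi_le_of_eLpNorm_ne_top
    (hK : AEStronglyMeasurable (Function.uncurry K) (μ.prod μ)) (hp : p ≠ 0) (hq : 1 ≤ q)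
    (hpq : p < q)
    (hT : ∀ g : α → X, Integrable g μ →
      eLpNorm (fun t ↦ ∫ s, K t s (g s) ∂μ) q μ ≤ C * eLpNorm g p μ)
    (hf : Integrable f μ) (hfp : eLpNorm f p μ ≠ ∞) :
    eLpNorm (fun t ↦ ∫ s in Ioi t, K t s (f s) ∂μ) q μ
      ≤ C * (2 ^ (-(1 / p - 1 / q).toReal) / (1 - 2 ^ (-(1 / p - 1 / q).toReal)))
        * eLpNorm f p μ := by
  have := isFiniteMeasure_powerMeasure hp hpq.ne_top hfp
  set G := cumulativeFraction (powerMeasure f p μ)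
  set r : ℝ≥0∞ := 2 ^ (-(1 / p - 1 / q).toReal)
  have h_null (t : α) (c : ℝ) : ∀ᵐ s ∂μ, G s = c → K t s (f s) = 0 := by
    filter_upwards [ae_eq_zero_of_cumulativeFraction_powerMeasure_eq hf.1 hp hpq.ne_top c]
      with s hs hc
    rw [hs hc, map_zero]
  calc
    eLpNorm (fun t ↦ ∫ s in Ioi t, K t s (f s) ∂μ) q μ
      ≤ ∑' j, eLpNorm (fun t ↦ ∫ s in rightSibling G (j + 1) t, K t s (f s) ∂μ) q μ :=
        eLpNorm_le_tsum_of_enorm_le_tsum hq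
          (fun j ↦ aestronglyMeasurable_setIntegral_rightSibling
            (aestronglyMeasurable_kernel_apply hK hf.1) monotone_cumulativeFraction (j + 1))
          (.of_forall fun t ↦ enorm_setIntegral_Ioi_le_tsum monotone_cumulativeFraction
            (cumulativeFraction_nonneg _) cumulativeFraction_le_one (h_null t) t)
    _ ≤ ∑' j, r ^ (j + 1) * (C * eLpNorm f p μ) := ENNReal.tsum_le_tsum fun j ↦
        eLpNorm_setIntegral_rightSibling_powerMeasure_le hK hp hpq hT hf (j + 1)
    _ = C * (r / (1 - r)) * eLpNorm f p μ := by
        rw [ENNReal.tsum_mul_right, ENNReal.tsum_geometric_add_one, div_eq_mul_inv]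
        ring

end TruncatedIntegral

section Constant

lemma toReal_one_div_sub_one_div_le_one {p : ℝ≥0∞} (hp : 1 ≤ p) (q : ℝ≥0∞) :
    (1 / p - 1 / q).toReal ≤ 1 :=
  ENNReal.toReal_mono ENNReal.one_ne_top (tsub_le_self.trans (by simpa using hp))

lemma mul_two_rpow_neg_div_le {C : ℝ≥0∞} {δ : ℝ} (hδ : δ ≤ 1) :
    C * (2 ^ (-δ) / (1 - 2 ^ (-δ)))
      ≤ (2 : ℝ≥0∞) ^ (-(2 * δ)) * (2 * C) / (1 - (2 : ℝ≥0∞) ^ (-δ)) := by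
  have h_le : (2 : ℝ≥0∞) ^ (-δ) ≤ 2 ^ (-(2 * δ)) * 2 :=
    calc
      (2 : ℝ≥0∞) ^ (-δ) ≤ 2 ^ (-(2 * δ) + 1) :=
        ENNReal.rpow_le_rpow_of_exponent_le (by norm_num) (by linarith)
      _ = 2 ^ (-(2 * δ)) * 2 := by
        rw [ENNReal.rpow_add _ _ (by simp) (by simp), ENNReal.rpow_one]
  rw [← mul_div_assoc, mul_comm C, ← mul_assoc]
  gcongr

end Constant

end ChristKiselev

open ChristKiselev

theorem christ_kiselev_general
    {α X Y : Type*} [LinearOrder α] [TopologicalSpace α] [OrderTopology α]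
    [SecondCountableTopology α] [MeasurableSpace α] [BorelSpace α]
    [NormedAddCommGroup X] [NormedSpace ℝ X]
    [NormedAddCommGroup Y] [NormedSpace ℝ Y] [CompleteSpace Y]
    {μ : Measure α} [SFinite μ] [NullSingletonClass μ] {K : α → α → X →L[ℝ] Y}
    (hK : AEStronglyMeasurable (Function.uncurry K) (μ.prod μ))
    {p q C : ℝ≥0∞} (hp : 1 ≤ p) (hpq : p < q)
    (hT : ∀ f : α → X, Integrable f μ →
      eLpNorm (fun t ↦ ∫ s, K t s (f s) ∂μ) q μ ≤ C * eLpNorm f p μ)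
    {f : α → X} (hf : Integrable f μ) :
    eLpNorm (fun t ↦ ∫ s in Ioi t, K t s (f s) ∂μ) q μ
      ≤ C * (2 ^ (-(1 / p - 1 / q).toReal) / (1 - 2 ^ (-(1 / p - 1 / q).toReal)))
        * eLpNorm f p μ := by
  have hq : 1 < q := hp.trans_lt hpq
  by_cases hfp : eLpNorm f p μ = ∞
  · rcases eq_or_ne C 0 with rfl | hC
    · -- As `T = 0`, the exponent `p` may be replaced by `1`, for which `f` has finite norm.
      have hT_one (g : α → X) (hg : Integrable g μ) :
          eLpNorm (fun t ↦ ∫ s, K t s (g s) ∂μ) q μ ≤ 0 * eLpNorm g 1 μ := by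
        simpa only [zero_mul] using hT g hg
      simpa only [zero_mul] using eLpNorm_setIntegral_Ioi_le_of_eLpNorm_ne_top hK one_ne_zero hq.le
        hq hT_one hf (memLp_one_iff_integrable.2 hf).eLpNorm_ne_top
    · rw [hfp, ENNReal.mul_top]
      · exact le_top
      · simp [hC]
  · exact eLpNorm_setIntegral_Ioi_le_of_eLpNorm_ne_top hK (zero_lt_one.trans_le hp).ne' hq.le hpq hT
      hf hfp

/-- **Christ–Kiselev Lemma.** Let `X`, `Y` be Banach spaces, `-∞ ≤ a < b ≤ ∞`
(encoded as extended reals, with `S = (a,b)` the corresponding interval of reals),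
and let `K(t,s)` be a continuous `B(X,Y)`-valued kernel on the interval.
If `Tf(t) = ∫_a^b K(t,s) f(s) ds` satisfies `‖Tf‖_{L^q;Y} ≤ C ‖f‖_{L^p;X}`
for all Bochner-integrable `f`, and `1 ≤ p < q ≤ ∞`, then the operator
`Wf(t) = ∫_t^b K(t,s) f(s) ds` satisfies
`‖Wf‖_{L^q;Y} ≤ (2^{-2(1/p-1/q)} · 2C)/(1 - 2^{-(1/p-1/q)}) ‖f‖_{L^p;X}`. -/
theorem christ_kiselev
    {X Y : Type*} [NormedAddCommGroup X] [NormedSpace ℝ X] [CompleteSpace X]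
    [NormedAddCommGroup Y] [NormedSpace ℝ Y] [CompleteSpace Y]
    (a b : EReal) (hab : a < b)
    (S : Set ℝ) (hS : S = {t : ℝ | a < (t : EReal) ∧ (t : EReal) < b})
    (K : ℝ → ℝ → (X →L[ℝ] Y))
    (hK : ContinuousOn (fun z : ℝ × ℝ => K z.1 z.2) (S ×ˢ S))
    (p q : ℝ≥0∞) (hp : 1 ≤ p) (hpq : p < q)
    (C : ℝ≥0∞)
    (hT : ∀ f : ℝ → X, Integrable f (volume.restrict S) →
      eLpNorm (fun t => ∫ s in S, (K t s) (f s)) q (volume.restrict S) ≤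
        C * eLpNorm f p (volume.restrict S)) :
    ∀ f : ℝ → X, Integrable f (volume.restrict S) →
      eLpNorm (fun t => ∫ s in S ∩ Set.Ioi t, (K t s) (f s)) q (volume.restrict S) ≤
        ((2 : ℝ≥0∞) ^ (-(2 * (1/p - 1/q).toReal)) * (2 * C) /
            (1 - (2 : ℝ≥0∞) ^ (-(1/p - 1/q).toReal))) *
          eLpNorm f p (volume.restrict S) := by
  intro f hf
  have hS_meas : MeasurableSet S := hS ▸
    (measurableSet_lt measurable_const measurable_coe_real_ereal).inter
      (measurableSet_lt measurable_coe_real_ereal measurable_const)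
  have hK_meas : AEStronglyMeasurable (Function.uncurry K)
      ((volume.restrict S).prod (volume.restrict S)) := by
    rw [Measure.prod_restrict]
    exact hK.aestronglyMeasurable (hS_meas.prod hS_meas)
  simp only [inter_comm S, ← Measure.restrict_restrict measurableSet_Ioi]
  exact (christ_kiselev_general hK_meas hp hpq hT hf).trans
    (mul_le_mul_left (mul_two_rpow_neg_div_le (toReal_one_div_sub_one_div_le_one hp q)) _)
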